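/- Let X be a path connected Hausdorff paracompact space, u ∈ H^*(X; G) a singular cohomology class, and f: Y → X a continuous map of Hausdorff paracompact spaces. Then swgt(f*u) ≥ swgt u. -/

import Mathlib

open Set

/-- A subset `U` of `A` is `φ`-categorical if it is open (in `A`) and the restriction of `φ`
to `U` is null-homotopic. -/
def IsCategoricalSet {A X : Type*} [TopologicalSpace A] [TopologicalSpace X]
    (φ : C(A, X)) (U : Set A) : Prop :=
  IsOpen U ∧ (φ.comp ⟨Subtype.val, continuous_subtype_val⟩ : C(U, X)).Nullhomotopic

/-- `CatLE φ k` says that `A` can be covered by `k + 1` `φ`-categorical open sets. -/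
def CatLE {A X : Type*} [TopologicalSpace A] [TopologicalSpace X] (φ : C(A, X)) (k : ℕ) : Prop :=
  ∃ U : Fin (k + 1) → Set A, (∀ i, IsCategoricalSet φ (U i)) ∧ (⋃ i, U i) = Set.univ

/-- The Lusternik–Schnirelmann category of a map `φ : A → X`: the least `k` such that `A` can
be covered by `k + 1` `φ`-categorical open sets, as an element of `ℕ∞`
(`⊤` if no finite categorical cover exists, i.e. if `cat φ` is undefined). -/
noncomputable def catMap {A X : Type*} [TopologicalSpace A] [TopologicalSpace X]
    (φ : C(A, X)) : ℕ∞ :=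
  sInf {n : ℕ∞ | ∃ k : ℕ, n = k ∧ CatLE φ k}

/-- The Lusternik–Schnirelmann category of a space: `cat X = cat (id X)`. -/
noncomputable def catSpace (X : Type*) [TopologicalSpace X] : ℕ∞ :=
  catMap (ContinuousMap.id X)


/-- The standard topological `n`-simplex. -/
abbrev TopSimplex (n : ℕ) := (stdSimplex ℝ (Fin (n + 1)) : Set (Fin (n + 1) → ℝ))

/-- The affine map of standard simplices induced by a map of vertex sets. -/
def simplexMap {a b : ℕ} (e : Fin (a + 1) → Fin (b + 1)) :
    C(TopSimplex a, TopSimplex b) where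
  toFun x := ⟨fun k => ∑ j, if e j = k then (x : Fin (a + 1) → ℝ) j else 0, by
    constructor
    · intro k
      refine Finset.sum_nonneg fun j _ => ?_
      split
      · exact x.2.1 j
      · exact le_rfl
    · show ∑ k, ∑ j, (if e j = k then (x : Fin (a + 1) → ℝ) j else 0) = 1
      rw [Finset.sum_comm]
      calc ∑ j, ∑ k, (if e j = k then (x : Fin (a + 1) → ℝ) j else 0)
          = ∑ j, (x : Fin (a + 1) → ℝ) j := by
            refine Finset.sum_congr rfl fun j _ => ?_
            simp
        _ = 1 := x.2.2⟩
  continuous_toFun := by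
    refine Continuous.subtype_mk (continuous_pi fun k => ?_) _
    refine continuous_finset_sum _ fun j _ => ?_
    by_cases h : e j = k <;> simp only [h, if_true, if_false]
    · exact (continuous_apply j).comp continuous_subtype_val
    · exact continuous_const

/-- The `i`-th face inclusion of standard simplices. -/
def simplexFace {n : ℕ} (i : Fin (n + 2)) : C(TopSimplex n, TopSimplex (n + 1)) :=
  simplexMap i.succAbove

/-- Singular `n`-cochains on `X` with coefficients in `G`. -/
abbrev SCochain (X : Type*) [TopologicalSpace X] (G : Type*) [AddCommGroup G] (n : ℕ) :=
  C(TopSimplex n, X) → G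

/-- The singular coboundary homomorphism. -/
noncomputable def coboundary (X : Type*) [TopologicalSpace X] (G : Type*) [AddCommGroup G] (n : ℕ) :
    SCochain X G n →+ SCochain X G (n + 1) where
  toFun c := fun σ => ∑ i : Fin (n + 2), (-1 : ℤ) ^ (i : ℕ) • c (σ.comp (simplexFace i))
  map_zero' := by funext σ; simp
  map_add' _ _ := by funext σ; simp [smul_add, Finset.sum_add_distrib]

/-- The subgroup of singular `n`-cocycles. -/
noncomputable def scocycles (X : Type*) [TopologicalSpace X] (G : Type*) [AddCommGroup G] (n : ℕ) :
    AddSubgroup (SCochain X G n) :=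
  (coboundary X G n).ker

/-- The subgroup of singular `n`-coboundaries. -/
noncomputable def scoboundaries (X : Type*) [TopologicalSpace X] (G : Type*) [AddCommGroup G] :
    ∀ n : ℕ, AddSubgroup (SCochain X G n)
  | 0 => ⊥
  | n + 1 => (coboundary X G n).range

/-- Singular cohomology `H^n(X; G)`: cocycles modulo coboundaries. -/
abbrev SCohomology (X : Type*) [TopologicalSpace X] (G : Type*) [AddCommGroup G] (n : ℕ) :=
  scocycles X G n ⧸ (scoboundaries X G n).addSubgroupOf (scocycles X G n)

variable {X Y : Type*} [TopologicalSpace X] [TopologicalSpace Y]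
variable (G : Type*) [AddCommGroup G]

/-- The pullback of singular cochains along a continuous map. -/
noncomputable def cochainPullback (f : C(X, Y)) (n : ℕ) : SCochain Y G n →+ SCochain X G n where
  toFun c := fun σ => c (f.comp σ)
  map_zero' := rfl
  map_add' _ _ := rfl

theorem cochainPullback_coboundary (f : C(X, Y)) (n : ℕ) (c : SCochain Y G n) :
    cochainPullback G f (n + 1) (coboundary Y G n c) =
      coboundary X G n (cochainPullback G f n c) := by
  funext σ
  simp [cochainPullback, coboundary, ContinuousMap.comp_assoc]

/-- The pullback of singular cocycles along a continuous map. -/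
noncomputable def cocyclePullback (f : C(X, Y)) (n : ℕ) : scocycles Y G n →+ scocycles X G n :=
  AddMonoidHom.codRestrict ((cochainPullback G f n).comp (scocycles Y G n).subtype) _
    (by
      rintro ⟨c, hc⟩
      have hc' : coboundary Y G n c = 0 := AddMonoidHom.mem_ker.mp hc
      show cochainPullback G f n c ∈ (coboundary X G n).ker
      rw [AddMonoidHom.mem_ker, ← cochainPullback_coboundary, hc']
      exact map_zero _)

/-- The map induced on singular cohomology by a continuous map. -/
noncomputable def cohPullback (f : C(X, Y)) (n : ℕ) :
    SCohomology Y G n →+ SCohomology X G n :=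
  QuotientAddGroup.map _ _ (cocyclePullback G f n) (by
    rintro ⟨c, hc⟩ h
    rw [AddSubgroup.mem_addSubgroupOf] at h
    rw [AddSubgroup.mem_comap, AddSubgroup.mem_addSubgroupOf]
    show cochainPullback G f n c ∈ scoboundaries X G n
    have h' : c ∈ scoboundaries Y G n := h
    clear h hc
    match n, c, h' with
    | 0, c, h' =>
      obtain rfl : c = 0 := AddSubgroup.mem_bot.mp h'
      show cochainPullback G f 0 0 ∈ (⊥ : AddSubgroup (SCochain X G 0))
      rw [map_zero]
      exact AddSubgroup.zero_mem _
    | n + 1, c, h' =>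
      obtain ⟨b, hb⟩ := h'
      exact ⟨cochainPullback G f n b, by
        rw [← hb]; exact (cochainPullback_coboundary G f n b).symm⟩)
universe u

/-- The strict category weight of a singular cohomology class `u ∈ H^q(X; G)`: the supremum
of all integers `k` such that `φ*u = 0` for every continuous map `φ : A → X` from a Hausdorff
paracompact space `A` with `cat φ < k`. -/
noncomputable def swgt {X : Type u} [TopologicalSpace X] {G : Type*} [AddCommGroup G] {q : ℕ}
    (u : SCohomology X G q) : ℕ∞ :=
  sSup {n : ℕ∞ | ∃ k : ℕ, n = k ∧
    ∀ (A : Type u) [TopologicalSpace A] [T2Space A] [ParacompactSpace A] (φ : C(A, X)),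
      catMap φ < (k : ℕ∞) → cohPullback G φ q u = 0}

theorem catMap_comp_le_aux {A Y X : Type*} [TopologicalSpace A] [TopologicalSpace Y]
    [TopologicalSpace X] (φ : C(A, Y)) (f : C(Y, X)) : catMap (f.comp φ) ≤ catMap φ := by
  apply sInf_le_sInf
  rintro n ⟨k, rfl, U, hU, hc⟩
  refine ⟨k, rfl, U, fun i => ⟨(hU i).1, ?_⟩, hc⟩
  exact (hU i).2.comp_right f

theorem cohPullback_comp_aux {A Y X G : Type*} [TopologicalSpace A] [TopologicalSpace Y]
    [TopologicalSpace X] [AddCommGroup G] (φ : C(A, Y)) (f : C(Y, X)) (q : ℕ)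
    (u : SCohomology X G q) :
    cohPullback G φ q (cohPullback G f q u) = cohPullback G (f.comp φ) q u := by
  induction u using QuotientAddGroup.induction_on with
  | H c => rfl

/-- Let `X` be a path connected Hausdorff paracompact space, `u ∈ H^*(X; G)`, and
`f : Y → X` a continuous map of Hausdorff paracompact spaces.  Then `swgt (f*u) ≥ swgt u`. -/
theorem swgt_pullback_ge {X Y : Type u} [TopologicalSpace X] [PathConnectedSpace X] [T2Space X]
    [ParacompactSpace X] [TopologicalSpace Y] [T2Space Y] [ParacompactSpace Y]
    {G : Type*} [AddCommGroup G] {q : ℕ} (u : SCohomology X G q) (f : C(Y, X)) :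
    swgt u ≤ swgt (cohPullback G f q u) := by
  apply sSup_le_sSup
  rintro n ⟨k, rfl, h⟩
  refine ⟨k, rfl, fun A _ _ _ φ hφ => ?_⟩
  rw [cohPullback_comp_aux]
  exact h A (f.comp φ) (lt_of_le_of_lt (catMap_comp_le_aux φ f) hφ)
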